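/- Let q ∈ S be a homogeneous polynomial of degree 1 with q ∉ (x,y), and let f, g ∈ S be homogeneous of degree 1 with no common zeros along Y. Set I_V = (x², xy, xq − y²), the saturated ideal of a quasiprimitive triple line V of type (−1,1) on Y. Then there is an S-module homomorphism u : I_V → S/(x,y) satisfying u(x²) = 0, u(xy) = f + (x,y), and u(xq − y²) = g + (x,y), and the kernel of u is exactly the ideal (x², xy², xyq − y³, g·xy − f·(xq − y²)). (This kernel is the saturated ideal of a multiplicity-four structure Z₂ on the line Y of arithmetic genus 0, lying in the non-extremal component of H(4,0).) -/

import Mathlib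

open MvPolynomial

/-- The pair `(f, g)` has no common zeros along the line `Y = {x = y = 0}`. -/
def NoCommonZerosAlongY {k : Type*} [Field k] (f g : MvPolynomial (Fin 4) k) : Prop :=
  ∀ c d : k, (c, d) ≠ (0, 0) → eval ![0, 0, c, d] f ≠ 0 ∨ eval ![0, 0, c, d] g ≠ 0

/-!
The forms `x, y, f, g` have no common zero but the origin, so they arise from the coordinates by a
linear change of variables and form a regular sequence. Relations on a regular pair are Koszul.
Three applications of this to `x, y` show that `a x² + b xy + c (xq − y²) = 0` forces
`b, c ∈ (x, y)`, so that `u` is well defined. One application to `f, g` on `S/(x, y)` shows that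
`a x² + b xy + c (xq − y²)` lies in the kernel of `u` only if `(b, c) ≡ r (g, −f)` modulo `(x, y)`
for some `r`; the multiple `r` accounts for the last generator of the kernel, and the congruence
for the others.
-/

open RingTheory.Sequence Pointwise

section KoszulRelations

variable {R : Type*} [CommRing R]

theorem exists_eq_smul_of_smul_add_smul_eq_zero {M : Type*} [AddCommGroup M] [Module R M]
    {f g : R} (h : IsWeaklyRegular M [f, g]) {b c : M} (hbc : f • b + g • c = 0) :
    ∃ r : M, b = g • r ∧ c = -(f • r) := by
  obtain ⟨hf, hg⟩ := (isWeaklyRegular_cons_iff M f [g]).1 h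
  rw [isWeaklyRegular_singleton_iff] at hg
  have hgc : g • c ∈ f • (⊤ : Submodule R M) := by
    rw [eq_neg_of_add_eq_zero_right hbc, ← smul_neg]
    exact Submodule.smul_mem_pointwise_smul _ _ _ Submodule.mem_top
  obtain ⟨r, -, rfl⟩ := (Submodule.mem_smul_pointwise_iff_exists _ _ _).1
    (mem_of_isSMulRegular_quotient_of_smul_mem hg hgc)
  have hb : b + g • r = 0 := hf.right_eq_zero_of_smul (by rw [smul_add, smul_comm f g r, hbc])
  exact ⟨-r, by rw [smul_neg]; exact eq_neg_of_add_eq_zero_left hb, by rw [smul_neg, neg_neg]⟩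

theorem isWeaklyRegular_pair_append_iff {x y f g : R} :
    IsWeaklyRegular R [x, y, f, g] ↔
      IsWeaklyRegular R [x, y] ∧ IsWeaklyRegular (R ⧸ Ideal.span {x, y}) [f, g] := by
  have hxy : (Ideal.ofList [x, y] • ⊤ : Submodule R R) = Ideal.span {x, y} := by
    simp [Ideal.span_insert]
  have h := isWeaklyRegular_append_iff R [x, y] [f, g]
  rwa [hxy] at h

end KoszulRelations

section SpanLift

variable {R M N ι : Type*} [Ring R] [AddCommGroup M] [Module R M] [AddCommGroup N]
  [Module R N] [Fintype ι]

theorem exists_linearMap_of_span_range_eq {m : ι → M} {n : ι → N} {P : Submodule R M}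
    (hP : Submodule.span R (Set.range m) = P)
    (hrel : ∀ a : ι → R, ∑ i, a i • m i = 0 → ∑ i, a i • n i = 0) :
    ∃ u : P →ₗ[R] N, ∀ (a : ι → R) (p : P), (p : M) = ∑ i, a i • m i → u p = ∑ i, a i • n i := by
  rw [← Fintype.range_linearCombination R m] at hP
  subst hP
  let π := Fintype.linearCombination R m
  let u := (LinearMap.ker π).liftQ (Fintype.linearCombination R n) hrel ∘ₗ
    π.quotKerEquivRange.symm.toLinearMap
  refine ⟨u, fun a p hp => ?_⟩
  have hπ : π.quotKerEquivRange.symm p = Submodule.Quotient.mk a :=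
    π.quotKerEquivRange.symm_apply_eq.2 (Subtype.ext hp)
  simp only [u, LinearMap.comp_apply, LinearEquiv.coe_coe, hπ]
  rfl

end SpanLift

section MultipleLines

variable {R : Type*} [CommRing R]

/-- The ideal `(x², xy, xq − y²)` of the triple line on `x = y = 0` determined by `q`. -/
def tripleLineIdeal (x y q : R) : Ideal R :=
  Ideal.span {x ^ 2, x * y, x * q - y ^ 2}

/-- The ideal `(x², xy², xyq − y³, g·xy − f·(xq − y²))` of the quadruple line on `x = y = 0`
determined by `q`, `f` and `g`. -/
def quadrupleLineIdeal (x y q f g : R) : Ideal R :=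
  Ideal.span {x ^ 2, x * y ^ 2, x * y * q - y ^ 3, g * (x * y) - f * (x * q - y ^ 2)}

variable {x y q f g : R}

theorem mem_tripleLineIdeal_iff {v : R} :
    v ∈ tripleLineIdeal x y q ↔
      ∃ a b c, v = a * x ^ 2 + b * (x * y) + c * (x * q - y ^ 2) := by
  simp only [tripleLineIdeal, Submodule.mem_span_triple, smul_eq_mul, eq_comm]

theorem mem_span_pair_of_tripleLine_relation (hxy : IsWeaklyRegular R [x, y]) {a b c : R}
    (h : a * x ^ 2 + b * (x * y) + c * (x * q - y ^ 2) = 0) :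
    b ∈ Ideal.span {x, y} ∧ c ∈ Ideal.span {x, y} := by
  -- The relation reads `x (ax + by + cq) + y (−cy) = 0`; its Koszul coefficient `r` satisfies
  -- `x (−r) + y c = 0`, and the coefficient `s` of the latter satisfies
  -- `x (a − sq) + y (b + sy) = 0`.
  obtain ⟨r, hr, hcy⟩ := exists_eq_smul_of_smul_add_smul_eq_zero hxy
    (b := a * x + b * y + c * q) (c := -(c * y)) (by simp only [smul_eq_mul]; linear_combination h)
  obtain ⟨s, hs, hc⟩ := exists_eq_smul_of_smul_add_smul_eq_zero hxy
    (b := -r) (c := c) (by simp only [smul_eq_mul] at hcy ⊢; linear_combination -hcy)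
  obtain ⟨t, -, hb⟩ := exists_eq_smul_of_smul_add_smul_eq_zero hxy
    (b := a - s * q) (c := b + s * y)
    (by simp only [smul_eq_mul] at hr hs hc ⊢; linear_combination hr - q * hc - y * hs)
  simp only [smul_eq_mul] at hb hc
  exact ⟨Ideal.mem_span_pair.2 ⟨-t, -s, by linear_combination -hb⟩,
    Ideal.mem_span_pair.2 ⟨-s, 0, by linear_combination -hc⟩⟩

theorem exists_linearMap_tripleLineIdeal (hxy : IsWeaklyRegular R [x, y])
    {N : Type*} [AddCommGroup N] [Module R N]
    (hN : Module.IsTorsionBySet R N (Ideal.span {x, y} : Ideal R)) (m n : N) :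
    ∃ u : tripleLineIdeal x y q →ₗ[R] N, ∀ (a b c : R) (v : tripleLineIdeal x y q),
      (v : R) = a * x ^ 2 + b * (x * y) + c * (x * q - y ^ 2) → u v = b • m + c • n := by
  have hspan : Submodule.span R (Set.range ![x ^ 2, x * y, x * q - y ^ 2]) =
      tripleLineIdeal x y q := by
    rw [tripleLineIdeal, Matrix.range_cons, Matrix.range_cons_cons_empty]
    rfl
  obtain ⟨u, hu⟩ := exists_linearMap_of_span_range_eq (n := ![0, m, n]) hspan fun a ha => by
    simp only [Fin.sum_univ_three, smul_eq_mul] at ha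
    obtain ⟨hb, hc⟩ := mem_span_pair_of_tripleLine_relation hxy ha
    have hbm : a 1 • m = 0 := @hN m ⟨_, hb⟩
    have hcn : a 2 • n = 0 := @hN n ⟨_, hc⟩
    simp [Fin.sum_univ_three, hbm, hcn]
  exact ⟨u, fun a b c v hv => by
    simpa [Fin.sum_univ_three] using hu ![a, b, c] v (by simpa [Fin.sum_univ_three] using hv)⟩

theorem mem_quadrupleLineIdeal_iff {v : R} :
    v ∈ quadrupleLineIdeal x y q f g ↔
      ∃ a b c r, v = a * x ^ 2 + b * (x * y ^ 2) + c * (x * y * q - y ^ 3) +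
        r * (g * (x * y) - f * (x * q - y ^ 2)) := by
  rw [quadrupleLineIdeal, Ideal.mem_span_insert]
  simp only [Ideal.span, Submodule.mem_span_triple, smul_eq_mul]
  constructor
  · rintro ⟨a, _, ⟨b, c, r, rfl⟩, rfl⟩
    exact ⟨a, b, c, r, by ring⟩
  · rintro ⟨a, b, c, r, rfl⟩
    exact ⟨a, _, ⟨b, c, r, rfl⟩, by ring⟩

theorem mem_quadrupleLineIdeal_iff_exists_tripleLine
    (hfg : IsWeaklyRegular (R ⧸ Ideal.span {x, y}) [f, g]) {v : R} :
    v ∈ quadrupleLineIdeal x y q f g ↔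
      ∃ a b c, v = a * x ^ 2 + b * (x * y) + c * (x * q - y ^ 2) ∧
        b * f + c * g ∈ Ideal.span {x, y} := by
  rw [mem_quadrupleLineIdeal_iff]
  constructor
  · rintro ⟨a, b, c, r, rfl⟩
    exact ⟨a, b * y + r * g, c * y - r * f, by ring,
      Ideal.mem_span_pair.2 ⟨0, b * f + c * g, by ring⟩⟩
  · rintro ⟨a, b, c, rfl, hbc⟩
    have hrel : f • Ideal.Quotient.mk (Ideal.span {x, y}) b +
        g • Ideal.Quotient.mk (Ideal.span {x, y}) c = 0 := by
      rw [← Ideal.Quotient.eq_zero_iff_mem] at hbc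
      simpa [Algebra.smul_def, mul_comm] using hbc
    obtain ⟨r', hb, hc⟩ := exists_eq_smul_of_smul_add_smul_eq_zero hfg hrel
    obtain ⟨r, rfl⟩ := Ideal.Quotient.mk_surjective r'
    have hb' : b - g * r ∈ Ideal.span {x, y} := Ideal.Quotient.eq.1 hb
    have hc' : c - -(f * r) ∈ Ideal.span {x, y} := Ideal.Quotient.eq.1 hc
    obtain ⟨s, t, hst⟩ := Ideal.mem_span_pair.1 hb'
    obtain ⟨s', t', hst'⟩ := Ideal.mem_span_pair.1 hc'
    exact ⟨a + s * y + s' * q, t - s', t', r,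
      by linear_combination -(x * y) * hst - (x * q - y ^ 2) * hst'⟩

theorem stmt_19_general (h : IsWeaklyRegular R [x, y, f, g]) :
    ∃ u : tripleLineIdeal x y q →ₗ[R] R ⧸ Ideal.span {x, y},
      u ⟨x ^ 2, Ideal.subset_span (by simp)⟩ = 0 ∧
      u ⟨x * y, Ideal.subset_span (by simp)⟩ = Ideal.Quotient.mk _ f ∧
      u ⟨x * q - y ^ 2, Ideal.subset_span (by simp)⟩ = Ideal.Quotient.mk _ g ∧
      LinearMap.ker u = Submodule.comap (Submodule.subtype (tripleLineIdeal x y q))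
        (quadrupleLineIdeal x y q f g) := by
  obtain ⟨hxy, hfg⟩ := isWeaklyRegular_pair_append_iff.1 h
  have hJ : Module.IsTorsionBySet R (R ⧸ Ideal.span {x, y}) (Ideal.span {x, y} : Ideal R) :=
    (Module.isTorsionBySet_quotient_iff _ _).2 fun r _ ha => Ideal.mul_mem_right r _ ha
  obtain ⟨u, hu⟩ := exists_linearMap_tripleLineIdeal (q := q) hxy hJ
    (Ideal.Quotient.mk _ f) (Ideal.Quotient.mk _ g)
  have hker {a b c : R} {v : tripleLineIdeal x y q}
      (hv : (v : R) = a * x ^ 2 + b * (x * y) + c * (x * q - y ^ 2)) :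
      u v = 0 ↔ b * f + c * g ∈ Ideal.span {x, y} := by
    rw [hu a b c v hv, ← Ideal.Quotient.eq_zero_iff_mem]
    rfl
  refine ⟨u, by simpa using hu 1 0 0 _ (by simp), by simpa using hu 0 1 0 _ (by simp),
    by simpa using hu 0 0 1 _ (by simp), Submodule.ext fun v => ?_⟩
  rw [LinearMap.mem_ker, Submodule.mem_comap, Submodule.subtype_apply,
    mem_quadrupleLineIdeal_iff_exists_tripleLine hfg]
  constructor
  · intro huv
    obtain ⟨a, b, c, hv⟩ := mem_tripleLineIdeal_iff.1 v.2
    exact ⟨a, b, c, hv, (hker hv).1 huv⟩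
  · rintro ⟨a, b, c, hv, hbc⟩
    exact (hker hv).2 hbc

end MultipleLines

section LinearForms

variable {R n : Type*} [CommRing R]

theorem isSMulRegular_X_quotient_span_X_image {s : Set n} {i : n} (hi : i ∉ s) :
    IsSMulRegular (MvPolynomial n R ⧸ Ideal.span (X '' s : Set (MvPolynomial n R)))
      (X i : MvPolynomial n R) := by
  rw [isSMulRegular_quotient_iff_mem_of_smul_mem]
  intro p hp
  rw [smul_eq_mul, mem_ideal_span_X_image] at hp
  refine mem_ideal_span_X_image.2 fun m hm => ?_
  have hm' : Finsupp.single i 1 + m ∈ (X i * p).support := by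
    rwa [mem_support_iff, coeff_X_mul, ← mem_support_iff]
  obtain ⟨j, hj, hjm⟩ := hp _ hm'
  have hij : i ≠ j := fun h => hi (h ▸ hj)
  exact ⟨j, hj, by simpa [hij] using hjm⟩

theorem isWeaklyRegular_map_X {l : List n} (hl : l.Nodup) :
    IsWeaklyRegular (MvPolynomial n R) (l.map (X : n → MvPolynomial n R)) := by
  refine ⟨fun i hi => ?_⟩
  have hspan : Ideal.ofList ((l.map X).take i) =
      Ideal.span (X '' {j | j ∈ l.take i} : Set (MvPolynomial n R)) := by
    simp [← List.map_take, Ideal.ofList, Set.image]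
  rw [smul_eq_mul, Ideal.mul_top, hspan, List.getElem_map]
  rw [List.length_map] at hi
  refine isSMulRegular_X_quotient_span_X_image fun hmem => ?_
  exact List.disjoint_take_drop hl le_rfl hmem
    (by rw [List.drop_eq_getElem_cons hi]; exact List.mem_cons_self)

variable [Fintype n]

theorem exists_toMvPolynomial_eq_of_isHomogeneous_one {m : Type*} {ℓ : m → MvPolynomial n R}
    (hℓ : ∀ i, (ℓ i).IsHomogeneous 1) : ∃ A : Matrix m n R, A.toMvPolynomial = ℓ := by
  have hcoeff (i : m) : ∃ c : n → R, ∑ j, c j • X j = ℓ i := by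
    rw [← Submodule.mem_span_range_iff_exists_fun, ← homogeneousSubmodule_one_eq_span_X]
    exact hℓ i
  choose A hA using hcoeff
  refine ⟨Matrix.of A, funext fun i => ?_⟩
  simp only [← hA i, Matrix.toMvPolynomial, Matrix.of_apply, smul_eq_C_mul, C_mul_X_eq_monomial]

variable [DecidableEq n]

/-- The linear change of variables `X i ↦ ∑ j, A i j • X j` given by an invertible matrix `A`,
as an automorphism of the polynomial ring. -/
noncomputable def linearChangeOfVariables (A : Matrix n n R) (hA : IsUnit A.det) :
    MvPolynomial n R ≃ₐ[R] MvPolynomial n R :=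
  AlgEquiv.ofAlgHom (bind₁ A.toMvPolynomial) (bind₁ A⁻¹.toMvPolynomial)
    (algHom_ext fun i => by
      rw [AlgHom.comp_apply, bind₁_X_right, ← Matrix.toMvPolynomial_mul,
        Matrix.nonsing_inv_mul A hA, Matrix.toMvPolynomial_one, AlgHom.id_apply])
    (algHom_ext fun i => by
      rw [AlgHom.comp_apply, bind₁_X_right, ← Matrix.toMvPolynomial_mul,
        Matrix.mul_nonsing_inv A hA, Matrix.toMvPolynomial_one, AlgHom.id_apply])

theorem linearChangeOfVariables_X {A : Matrix n n R} (hA : IsUnit A.det) (i : n) :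
    linearChangeOfVariables A hA (X i) = A.toMvPolynomial i :=
  bind₁_X_right _ i

theorem isWeaklyRegular_map_toMvPolynomial {A : Matrix n n R} (hA : IsUnit A.det)
    {l : List n} (hl : l.Nodup) :
    IsWeaklyRegular (MvPolynomial n R) (l.map A.toMvPolynomial) := by
  let e := linearChangeOfVariables A hA
  refine (AddEquiv.isWeaklyRegular_congr (e := e.toRingEquiv.toAddEquiv) (as := l.map X) ?_).1
    (isWeaklyRegular_map_X (R := R) hl)
  rw [List.forall₂_map_left_iff, List.forall₂_map_right_iff, List.forall₂_same]
  intro i _ p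
  change e (X i * p) = A.toMvPolynomial i * e p
  rw [map_mul, linearChangeOfVariables_X]

end LinearForms

theorem isWeaklyRegular_map_of_isHomogeneous_one {k n : Type*} [Field k] [Finite n]
    {ℓ : n → MvPolynomial n k} (hℓ : ∀ i, (ℓ i).IsHomogeneous 1)
    (hzero : ∀ v, (∀ i, eval v (ℓ i) = 0) → v = 0) {l : List n} (hl : l.Nodup) :
    IsWeaklyRegular (MvPolynomial n k) (l.map ℓ) := by
  classical
  have := Fintype.ofFinite n
  obtain ⟨A, rfl⟩ := exists_toMvPolynomial_eq_of_isHomogeneous_one hℓ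
  have hdet : A.det ≠ 0 := fun hdet => by
    obtain ⟨v, hv, hAv⟩ := Matrix.exists_mulVec_eq_zero_iff.2 hdet
    exact hv (hzero v fun i => by rw [Matrix.toMvPolynomial_eval_eq_apply, hAv, Pi.zero_apply])
  exact isWeaklyRegular_map_toMvPolynomial hdet.isUnit hl

theorem NoCommonZerosAlongY.isWeaklyRegular {k : Type*} [Field k] {f g : MvPolynomial (Fin 4) k}
    (hfg : NoCommonZerosAlongY f g) (hf : f.IsHomogeneous 1) (hg : g.IsHomogeneous 1) :
    IsWeaklyRegular (MvPolynomial (Fin 4) k) [X 0, X 1, f, g] := by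
  refine isWeaklyRegular_map_of_isHomogeneous_one (ℓ := ![X 0, X 1, f, g]) (l := [0, 1, 2, 3])
    ?_ ?_ (by decide)
  · simp [Fin.forall_fin_succ, hf, hg, isHomogeneous_X]
  · intro v hv
    have hv0 : v 0 = 0 := by simpa using hv 0
    have hv1 : v 1 = 0 := by simpa using hv 1
    have hvY : v = ![0, 0, v 2, v 3] := by ext i; fin_cases i <;> simp [hv0, hv1]
    by_contra hne
    have hcd : (v 2, v 3) ≠ (0, 0) := fun h => hne <| by
      rw [hvY, (Prod.mk.inj h).1, (Prod.mk.inj h).2]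
      simp
    have hnot := hfg _ _ hcd
    rw [← hvY] at hnot
    exact hnot.elim (· (hv 2)) (· (hv 3))

/-- with `I_V = (x², xy, xq − y²)` the ideal of a quasiprimitive triple
line of type `(−1,1)` (where `q` is linear, `q ∉ (x,y)`), and `f, g` linear forms with
no common zeros along `Y`, there is an `S`-module homomorphism `u : I_V → S/(x,y)` with
`u(x²) = 0`, `u(xy) = f̄`, `u(xq − y²) = ḡ`, whose kernel is exactly the ideal
`(x², xy², xyq − y³, g·xy − f·(xq − y²))`, the saturated ideal of a multiplicity-four
structure `Z₂` of genus `0` in the non-extremal component of `H(4,0)`. -/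
theorem stmt_19 {k : Type*} [Field k] [IsAlgClosed k]
    (q f g : MvPolynomial (Fin 4) k)
    (hq : q.IsHomogeneous 1)
    (hqY : q ∉ (Ideal.span {X 0, X 1} : Ideal (MvPolynomial (Fin 4) k)))
    (hf : f.IsHomogeneous 1) (hg : g.IsHomogeneous 1)
    (hfg : NoCommonZerosAlongY f g) :
    ∃ u : (Ideal.span {X 0 ^ 2, X 0 * X 1, X 0 * q - X 1 ^ 2} :
          Ideal (MvPolynomial (Fin 4) k)) →ₗ[MvPolynomial (Fin 4) k]
        (MvPolynomial (Fin 4) k ⧸ (Ideal.span {X 0, X 1} : Ideal (MvPolynomial (Fin 4) k))),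
      u ⟨X 0 ^ 2, Ideal.subset_span (by simp)⟩ = 0 ∧
      u ⟨X 0 * X 1, Ideal.subset_span (by simp)⟩ = Ideal.Quotient.mk _ f ∧
      u ⟨X 0 * q - X 1 ^ 2, Ideal.subset_span (by simp)⟩ = Ideal.Quotient.mk _ g ∧
      LinearMap.ker u = Submodule.comap
        (Submodule.subtype (Ideal.span {X 0 ^ 2, X 0 * X 1, X 0 * q - X 1 ^ 2} :
          Ideal (MvPolynomial (Fin 4) k)))
        (Ideal.span {X 0 ^ 2, X 0 * X 1 ^ 2, X 0 * X 1 * q - X 1 ^ 3,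
          g * (X 0 * X 1) - f * (X 0 * q - X 1 ^ 2)}) := by
  exact stmt_19_general (hfg.isWeaklyRegular hf hg)
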